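/- Assume λ is strictly decreasing with λ_p > 0. Then the subdifferential of J is constant along M near x: for every u = Σ_{k=1}^m c'_k v_k with c'_1, …, c'_m ∈ ℝ (c'_m = 0 if c_m = 0) and ‖u − x‖_∞ < ε_c/2, one has ∂J(u) = ∂J(x). -/

import Mathlib

open Finset Filter

noncomputable section

/-- The sign of a real number, with the convention `sgn 0 = 1`. -/
def sgn (t : ℝ) : ℝ := if t < 0 then -1 else 1

/-- A permutation sorting the absolute values of `β` in nonincreasing order. -/
def sortPerm {p : ℕ} (β : Fin p → ℝ) : Equiv.Perm (Fin p) :=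
  (Fin.revPerm).trans (Tuple.sort fun j => |β j|)

/-- The sorted ℓ₁ norm `J(β) = Σ_j λ_j |β|_(j)`. -/
def sortedL1 {p : ℕ} (lam β : Fin p → ℝ) : ℝ :=
  ∑ j, lam j * |β (sortPerm β j)|

/-- `β(z)`: the vector obtained from `β` by replacing entries of the cluster
`{i : |β i| = ck}` by `sign(β i) * z`. -/
def cupd {p : ℕ} (β : Fin p → ℝ) (ck z : ℝ) : Fin p → ℝ :=
  fun i => if |β i| = ck then sgn (β i) * z else β i

/-- The partial sorted ℓ₁ norm `H(z) = J(β(z))`. -/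
def Hfun {p : ℕ} (lam β : Fin p → ℝ) (ck : ℝ) (z : ℝ) : ℝ :=
  sortedL1 lam (cupd β ck z)

/-- `S(w) = Σ_{j ∈ C(w)} λ_{(j)⁻_w}`, where `C(w) = {j : |β(w)_j| = |w|}`. -/
def Sval {p : ℕ} (lam β : Fin p → ℝ) (ck : ℝ) (w : ℝ) : ℝ :=
  ∑ j, if |cupd β ck w j| = |w| then lam ((sortPerm (cupd β ck w))⁻¹ j) else 0

/-- squared Euclidean norm -/
def sqnorm {n : ℕ} (v : Fin n → ℝ) : ℝ := ∑ i, (v i) ^ 2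

/-- `G(z) = (1/2)‖y − Xβ(z)‖² + H(z)`. -/
def Gfun {n p : ℕ} (lam : Fin p → ℝ) (X : Matrix (Fin n) (Fin p) ℝ) (y : Fin n → ℝ)
    (β : Fin p → ℝ) (ck : ℝ) (z : ℝ) : ℝ :=
  (1/2) * sqnorm (fun i => y i - ∑ j, X i j * cupd β ck z j) + Hfun lam β ck z

/-- `x̃ = Σ_{j ∈ C_k} sign(β_j) X_{:j}`. -/
def xtil {n p : ℕ} (X : Matrix (Fin n) (Fin p) ℝ) (β : Fin p → ℝ) (ck : ℝ) : Fin n → ℝ :=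
  fun i => ∑ j, if |β j| = ck then sgn (β j) * X i j else 0

/-- `γ = c_k ω + x̃ᵀ r` where `r = y − Xβ` and `ω = ‖x̃‖²`. -/
def gam {n p : ℕ} (X : Matrix (Fin n) (Fin p) ℝ) (y : Fin n → ℝ) (β : Fin p → ℝ) (ck : ℝ) : ℝ :=
  ck * sqnorm (xtil X β ck) + ∑ i, xtil X β ck i * (y i - ∑ j, X i j * β j)

end

/-- The subdifferential of the sorted ℓ₁ norm at `x`, with the Euclidean inner product
written out as a sum. -/
def subdiffJ' {p : ℕ} (lam : Fin p → ℝ) (x : Fin p → ℝ) : Set (Fin p → ℝ) :=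
  {g | ∀ u : Fin p → ℝ, sortedL1 lam x + ∑ j, g j * (u j - x j) ≤ sortedL1 lam u}

/-! Let `g ∈ ∂J(x)` and let `u` respect the signs, the zeros and the weak order of magnitudes of
`x`. One permutation then sorts `x`, `u` and `x + s u` for small `s`, so `s ↦ J(x + s u)` is affine
near `0` with slope `J(u)`. As `s ↦ J(x + s u) - s ⟨g, u⟩` is minimal at `0`, this slope is
`⟨g, u⟩`. Taking also `u = x`, the subgradient inequality at `x` becomes `⟨g, w⟩ ≤ J(w)` for all
`w`, which is the one at `u`.

Moving every cluster value by less than half the gap, with `0` kept fixed, preserves signs, zeros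
and order in both directions. -/

theorem abs_sgn (t : ℝ) : |sgn t| = 1 := by
  unfold sgn
  split_ifs <;> simp

theorem sgn_mul_abs (t : ℝ) : sgn t * |t| = t := by
  unfold sgn
  split_ifs with h
  · rw [abs_of_neg h, neg_one_mul, neg_neg]
  · rw [abs_of_nonneg (not_lt.mp h), one_mul]

theorem abs_sgn_mul_sub (t a : ℝ) : |sgn t * a - t| = |a - (|t|)| := by
  nth_rewrite 2 [← sgn_mul_abs t]
  rw [← mul_sub, abs_mul, abs_sgn, one_mul]

theorem abs_add_mul_of_mul_nonneg {R : Type*} [CommRing R] [LinearOrder R] [IsStrictOrderedRing R]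
    {a b s : R} (hab : 0 ≤ a * b) (hs : |s * b| ≤ |a|) : |a + s * b| = |a| + s * |b| := by
  have hsb := abs_le.mp hs
  rcases mul_nonneg_iff.mp hab with ⟨ha, hb⟩ | ⟨ha, hb⟩
  · rw [abs_of_nonneg ha] at hsb ⊢
    rw [abs_of_nonneg hb, abs_of_nonneg (by linarith)]
  · rw [abs_of_nonpos ha] at hsb ⊢
    rw [abs_of_nonpos hb, abs_of_nonpos (by linarith)]
    ring

/-- The pattern of `x` refines that of `u`: no entry has opposite signs in `x` and `u`, zeros of
`x` are zeros of `u`, and the magnitudes of `u` are weakly ordered as those of `x`. Thus `u` may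
merge clusters of `x`, or send its smallest one to zero, but not split or reorder them; two vectors
have the same pattern when `AntisymmRel PatternRefines` holds. -/
structure PatternRefines {ι : Type*} (x u : ι → ℝ) : Prop where
  zero_le_mul : ∀ j, 0 ≤ x j * u j
  apply_eq_zero : ∀ j, x j = 0 → u j = 0
  abs_mono : ∀ i j, |x i| ≤ |x j| → |u i| ≤ |u j|

namespace PatternRefines

variable {ι κ : Type*}

theorem refl (x : ι → ℝ) : PatternRefines x x :=
  ⟨fun j => mul_self_nonneg (x j), fun _ h => h, fun _ _ h => h⟩

theorem of_nonneg {x u : ι → ℝ} (hx : ∀ i, 0 ≤ x i) (hu : ∀ i, 0 ≤ u i)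
    (hzero : ∀ i, x i = 0 → u i = 0) (hmono : ∀ i j, x i ≤ x j → u i ≤ u j) :
    PatternRefines x u where
  zero_le_mul i := mul_nonneg (hx i) (hu i)
  apply_eq_zero := hzero
  abs_mono i j hij := by
    rw [abs_of_nonneg (hx i), abs_of_nonneg (hx j)] at hij
    rw [abs_of_nonneg (hu i), abs_of_nonneg (hu j)]
    exact hmono i j hij

theorem mul_comp {c c' : κ → ℝ} (h : PatternRefines c c') {s : ι → ℝ} (hs : ∀ j, |s j| = 1)
    (k : ι → κ) : PatternRefines (fun j => s j * c (k j)) fun j => s j * c' (k j) where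
  zero_le_mul j := by
    rw [mul_mul_mul_comm]
    exact mul_nonneg (mul_self_nonneg _) (h.zero_le_mul _)
  apply_eq_zero j hj := by
    have hsj : s j ≠ 0 := abs_ne_zero.mp (by simp [hs j])
    rw [h.apply_eq_zero _ ((mul_eq_zero_iff_left hsj).mp hj), mul_zero]
  abs_mono i j hij := by
    simp only [abs_mul, hs, one_mul] at hij ⊢
    exact h.abs_mono _ _ hij

theorem eventually_abs_add_mul [Finite ι] {x u : ι → ℝ} (h : PatternRefines x u) :
    ∀ᶠ s in nhds (0 : ℝ), ∀ j, |x j + s * u j| = |x j| + s * |u j| := by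
  refine eventually_all.mpr fun j => ?_
  suffices hsmall : ∀ᶠ s in nhds (0 : ℝ), |s * u j| ≤ |x j| from
    hsmall.mono fun s hs => abs_add_mul_of_mul_nonneg (h.zero_le_mul j) hs
  by_cases hj : x j = 0
  · simp [hj, h.apply_eq_zero j hj]
  · have hcont : ContinuousAt (fun s : ℝ => |s * u j|) 0 := by fun_prop
    exact (hcont.eventually_lt continuousAt_const (by simpa using hj)).mono fun s hs => hs.le

theorem eventually_abs_add_mul_mono [Finite ι] {x u : ι → ℝ} (h : PatternRefines x u) :
    ∀ᶠ s in nhds (0 : ℝ), ∀ i j, |x i| ≤ |x j| → |x i + s * u i| ≤ |x j + s * u j| := by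
  refine eventually_all.mpr fun i => eventually_all.mpr fun j => ?_
  rcases lt_trichotomy |x i| |x j| with hlt | heq | hgt
  · have hcont (l : ι) : ContinuousAt (fun s : ℝ => |x l + s * u l|) 0 := by fun_prop
    exact ((hcont i).eventually_lt (hcont j) (by simpa using hlt)).mono fun s hs _ => hs.le
  · have hu : |u i| = |u j| := le_antisymm (h.abs_mono i j heq.le) (h.abs_mono j i heq.ge)
    filter_upwards [h.eventually_abs_add_mul] with s habs _
    rw [habs, habs, heq, hu]
  · exact .of_forall fun s hle => absurd hle hgt.not_ge

end PatternRefines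

section SortedL1

variable {p : ℕ}

theorem antitone_abs_comp_sortPerm (z : Fin p → ℝ) : Antitone fun j => |z (sortPerm z j)| :=
  fun _ _ hab => Tuple.monotone_sort (fun j => |z j|) (Fin.rev_le_rev.mpr hab)

theorem sortedL1_eq_sum_of_antitone (lam : Fin p → ℝ) {z : Fin p → ℝ} {σ : Equiv.Perm (Fin p)}
    (hσ : Antitone fun j => |z (σ j)|) : sortedL1 lam z = ∑ j, lam j * |z (σ j)| := by
  have hmono : Monotone ((fun j => |z j|) ∘ Fin.revPerm.trans σ) := fun a b hab =>
    hσ (Fin.rev_le_rev.mpr hab)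
  have hsort := Tuple.comp_sort_eq_comp_iff_monotone.mpr hmono
  refine Finset.sum_congr rfl fun j _ => congrArg (lam j * ·) ?_
  simpa [sortPerm] using (congrFun hsort j.rev).symm

theorem sortedL1_eq_sum_sortPerm (lam : Fin p → ℝ) {x z : Fin p → ℝ}
    (h : ∀ i j, |x i| ≤ |x j| → |z i| ≤ |z j|) :
    sortedL1 lam z = ∑ j, lam j * |z (sortPerm x j)| :=
  sortedL1_eq_sum_of_antitone lam fun _ _ hab => h _ _ (antitone_abs_comp_sortPerm x hab)

namespace PatternRefines

variable {x u : Fin p → ℝ}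

theorem eventually_sortedL1_add_smul (h : PatternRefines x u) (lam : Fin p → ℝ) :
    ∀ᶠ s in nhds (0 : ℝ), sortedL1 lam (x + s • u) = sortedL1 lam x + s * sortedL1 lam u := by
  filter_upwards [h.eventually_abs_add_mul, h.eventually_abs_add_mul_mono] with s habs hmono
  calc sortedL1 lam (x + s • u)
      = ∑ j, lam j * |x (sortPerm x j) + s * u (sortPerm x j)| :=
        sortedL1_eq_sum_sortPerm lam hmono
    _ = ∑ j, lam j * |x (sortPerm x j)| + s * ∑ j, lam j * |u (sortPerm x j)| := by
        simp only [habs, mul_add, sum_add_distrib, mul_sum, mul_left_comm]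
    _ = sortedL1 lam x + s * sortedL1 lam u := by
        rw [sortedL1_eq_sum_sortPerm lam h.abs_mono, sortedL1]

theorem hasDerivAt_sortedL1_add_smul (h : PatternRefines x u) (lam : Fin p → ℝ) :
    HasDerivAt (fun s : ℝ => sortedL1 lam (x + s • u)) (sortedL1 lam u) 0 := by
  have haffine : HasDerivAt (fun s => sortedL1 lam x + s * sortedL1 lam u) (sortedL1 lam u) 0 := by
    simpa using ((hasDerivAt_id (0 : ℝ)).mul_const (sortedL1 lam u)).const_add (sortedL1 lam x)
  exact haffine.congr_of_eventuallyEq (h.eventually_sortedL1_add_smul lam)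

theorem dotProduct_eq_sortedL1 {lam g : Fin p → ℝ} (h : PatternRefines x u)
    (hg : g ∈ subdiffJ' lam x) : g ⬝ᵥ u = sortedL1 lam u := by
  have hmin : IsLocalMin (fun s : ℝ => sortedL1 lam (x + s • u) - s * (g ⬝ᵥ u)) 0 := by
    refine .of_forall fun s => ?_
    have hsub : sortedL1 lam x + g ⬝ᵥ (x + s • u - x) ≤ sortedL1 lam (x + s • u) := hg _
    rw [add_sub_cancel_left, dotProduct_smul, smul_eq_mul] at hsub
    simpa using le_sub_iff_add_le.mpr hsub
  have hderiv := (h.hasDerivAt_sortedL1_add_smul lam).sub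
    ((hasDerivAt_id (0 : ℝ)).mul_const (g ⬝ᵥ u))
  linarith [hmin.hasDerivAt_eq_zero hderiv]

theorem subdiffJ'_subset (h : PatternRefines x u) (lam : Fin p → ℝ) :
    subdiffJ' lam x ⊆ subdiffJ' lam u := by
  intro g hg w
  have hw : sortedL1 lam x + g ⬝ᵥ (w - x) ≤ sortedL1 lam w := hg w
  change sortedL1 lam u + g ⬝ᵥ (w - u) ≤ sortedL1 lam w
  rw [dotProduct_sub, (refl x).dotProduct_eq_sortedL1 hg] at hw
  rw [dotProduct_sub, h.dotProduct_eq_sortedL1 hg]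
  linarith

end PatternRefines

theorem subdiffJ'_eq_of_antisymmRel {x u : Fin p → ℝ} (h : AntisymmRel PatternRefines x u)
    (lam : Fin p → ℝ) : subdiffJ' lam x = subdiffJ' lam u :=
  (h.1.subdiffJ'_subset lam).antisymm (h.2.subdiffJ'_subset lam)

end SortedL1

section Clusters

variable {κ : Type*} {c c' : κ → ℝ} {ε : ℝ}

theorem apply_lt_apply_of_abs_sub_lt (hsep : ∀ i j, i ≠ j → ε < |c i - c j|)
    (hclose : ∀ i, |c' i - c i| < ε / 2) {i j : κ} (hij : c i < c j) : c' i < c' j := by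
  have hgap := hsep j i fun h => hij.ne (congrArg c h.symm)
  rw [abs_of_pos (sub_pos.mpr hij)] at hgap
  linarith [(abs_lt.mp (hclose i)).2, (abs_lt.mp (hclose j)).1]

theorem pos_of_abs_sub_lt {a b : ℝ} (hε : ε < a) (hclose : |b - a| < ε / 2) : 0 < b := by
  linarith [abs_nonneg (b - a), (abs_lt.mp hclose).1]

theorem antisymmRel_patternRefines_of_abs_sub_lt (hc : Function.Injective c)
    (hc_nonneg : ∀ i, 0 ≤ c i) (hsep : ∀ i j, i ≠ j → ε < |c i - c j|)
    (hmin : ∀ i, c i ≠ 0 → ε < c i) (hclose : ∀ i, |c' i - c i| < ε / 2)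
    (hzero : ∀ i, c i = 0 → c' i = 0) : AntisymmRel PatternRefines c c' := by
  have hpos (i) (hi : c i ≠ 0) : 0 < c' i := pos_of_abs_sub_lt (hmin i hi) (hclose i)
  have hlt {i j} (hij : c i < c j) : c' i < c' j := apply_lt_apply_of_abs_sub_lt hsep hclose hij
  have hc'_nonneg (i) : 0 ≤ c' i := by
    by_cases hi : c i = 0
    · exact (hzero i hi).ge
    · exact (hpos i hi).le
  constructor
  · refine .of_nonneg hc_nonneg hc'_nonneg hzero fun i j hij => ?_
    rcases hij.lt_or_eq with hij | hij
    · exact (hlt hij).le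
    · rw [hc hij]
  · refine .of_nonneg hc'_nonneg hc_nonneg (fun i hi => ?_) fun i j hij => ?_
    · exact not_imp_comm.mp (hpos i) hi.not_gt
    · exact not_lt.mp fun hji => (hlt hji).not_ge hij

theorem sum_mul_ite_abs_eq [Fintype κ] (hc : Function.Injective c) (c' : κ → ℝ) {t : ℝ} {i : κ}
    (ht : |t| = c i) : ∑ l, c' l * (if |t| = c l then sgn t else 0) = sgn t * c' i := by
  classical
  simp only [ht, hc.eq_iff, mul_ite, mul_zero, sum_ite_eq, mem_univ, if_true, mul_comm]

theorem eq_last_of_strictAnti_of_eq_zero {α : Type*} [Preorder α] [Zero α] {m : ℕ} (hm : 0 < m)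
    {c : Fin m → α} (hc_anti : StrictAnti c) (hc_nonneg : ∀ i, 0 ≤ c i) {i : Fin m}
    (hi : c i = 0) : i = ⟨m - 1, by omega⟩ := by
  refine (Fin.mk_le_mk.mpr (by omega)).antisymm (hc_anti.le_iff_ge.mp ?_)
  exact hi.trans_le (hc_nonneg _)

end Clusters

theorem subdifferential_constant_on_manifold_general
    {p m : ℕ} (hm : 0 < m) (lam x : Fin p → ℝ) (c : Fin m → ℝ) (hc_anti : StrictAnti c)
    (h_attain : ∀ i, ∃ j, |x j| = c i) (h_cover : ∀ j, ∃ i, |x j| = c i)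
    (ε : ℝ) (hε_sep : ∀ i j, i ≠ j → ε < |c i - c j|) (hε_min : ∀ i, c i ≠ 0 → ε < c i)
    (c' : Fin m → ℝ) (hc'_zero : c ⟨m - 1, by omega⟩ = 0 → c' ⟨m - 1, by omega⟩ = 0)
    (u : Fin p → ℝ) (hu : u = fun j => ∑ i, c' i * (if |x j| = c i then sgn (x j) else 0))
    (h_close : ∀ j, |u j - x j| < ε / 2) :
    subdiffJ' lam u = subdiffJ' lam x := by
  choose k hk using h_cover
  have hx_eq (j) : x j = sgn (x j) * c (k j) := by rw [← hk, sgn_mul_abs]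
  have hu_eq (j) : u j = sgn (x j) * c' (k j) :=
    (congrFun hu j).trans (sum_mul_ite_abs_eq hc_anti.injective c' (hk j))
  have hc_nonneg (i) : 0 ≤ c i := by
    obtain ⟨j, hj⟩ := h_attain i
    exact hj ▸ abs_nonneg (x j)
  have hclose (i) : |c' i - c i| < ε / 2 := by
    obtain ⟨j, hj⟩ := h_attain i
    obtain rfl : k j = i := hc_anti.injective ((hk j).symm.trans hj)
    rw [← hj, ← abs_sgn_mul_sub, ← hu_eq]
    exact h_close j
  have hzero (i) (hi : c i = 0) : c' i = 0 := by
    obtain rfl := eq_last_of_strictAnti_of_eq_zero hm hc_anti hc_nonneg hi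
    exact hc'_zero hi
  have hpattern : AntisymmRel PatternRefines c c' :=
    antisymmRel_patternRefines_of_abs_sub_lt hc_anti.injective hc_nonneg hε_sep hε_min hclose hzero
  refine subdiffJ'_eq_of_antisymmRel (AntisymmRel.symm ?_) lam
  rw [funext hx_eq, funext hu_eq]
  exact ⟨hpattern.1.mul_comp (fun j => abs_sgn (x j)) k,
    hpattern.2.mul_comp (fun j => abs_sgn (x j)) k⟩

/-- for strictly decreasing `λ` with `λ_p > 0`, the subdifferential of `J`
is constant along the manifold `M` near `x`: `∂J(u) = ∂J(x)` for every
`u = Σ_k c'_k v_k` (with `c'_m = 0` if `c_m = 0`) such that `‖u − x‖_∞ < ε_c/2`. -/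
theorem subdifferential_constant_on_manifold
    {p m : ℕ} (hp : 0 < p) (hm : 0 < m)
    (lam : Fin p → ℝ)
    (hlam_anti : StrictAnti lam)
    (hlam_last : 0 < lam ⟨p - 1, by omega⟩)
    (x : Fin p → ℝ) (c : Fin m → ℝ)
    (hc_anti : StrictAnti c) (hc_nonneg : ∀ i, 0 ≤ c i)
    (h_attain : ∀ i, ∃ j, |x j| = c i)
    (h_cover : ∀ j, ∃ i, |x j| = c i)
    (ε : ℝ) (hε_pos : 0 < ε)
    (hε_sep : ∀ i j, i ≠ j → ε < |c i - c j|)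
    (hε_min : ∀ i, c i ≠ 0 → ε < c i)
    (c' : Fin m → ℝ)
    (hc'_zero : c ⟨m - 1, by omega⟩ = 0 → c' ⟨m - 1, by omega⟩ = 0)
    (u : Fin p → ℝ)
    (hu : u = fun j => ∑ i, c' i * (if |x j| = c i then sgn (x j) else 0))
    (h_close : ∀ j, |u j - x j| < ε / 2) :
    subdiffJ' lam u = subdiffJ' lam x :=
  subdifferential_constant_on_manifold_general hm lam x c hc_anti h_attain h_cover ε hε_sep hε_min
    c' hc'_zero u hu h_close
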